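/- arXiv:2104.03732 — 2 statements merged into one kernel-verified Lean document; each statement's English description precedes it below -/
import Mathlib

section
/- Sobolev product estimate on the torus, Fourier form (Lemma 2.1 of the paper): Let d ≥ 1 and s₁, s₂ ∈ ℝ satisfy s₁ < d/2, s₂ < d/2 and s₁ + s₂ > 0. Then there exists a constant C > 0, depending only on d, s₁, s₂, such that for all a, b : ℤ^d → ℂ with a(0) = b(0) = 0, ‖a‖_{H^{s₁}} < ∞ and ‖b‖_{H^{s₂}} < ∞, the convolution c(k) = Σ_{l ∈ ℤ^d} a(l)·b(k − l) converges absolutely for every k ∈ ℤ^d, and ‖c‖_{H^{s₁+s₂−d/2}} ≤ C · ‖a‖_{H^{s₁}} · ‖b‖_{H^{s₂}}. -/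
/-- The squared homogeneous Sobolev weight `|k|^{2s} = (Σᵢ kᵢ²)^s` for `k ∈ ℤ^d`. -/
noncomputable def sobolevWeight {d : ℕ} (s : ℝ) (k : Fin d → ℤ) : ℝ :=
  (∑ i, ((k i : ℝ)) ^ 2) ^ s

/-- The summand `|k|^{2s} |a(k)|²` indexed by nonzero `k ∈ ℤ^d`. -/
noncomputable def sobolevSummand {d : ℕ} (s : ℝ) (a : (Fin d → ℤ) → ℂ)
    (k : {k : Fin d → ℤ // k ≠ 0}) : ℝ :=
  sobolevWeight s k.1 * ‖a k.1‖ ^ 2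

/-- The homogeneous Sobolev norm `‖a‖_{H^s} = (Σ_{k≠0} |k|^{2s}|a(k)|²)^{1/2}`. -/
noncomputable def sobolevNorm {d : ℕ} (s : ℝ) (a : (Fin d → ℤ) → ℂ) : ℝ :=
  Real.sqrt (∑' k : {k : Fin d → ℤ // k ≠ 0}, sobolevSummand s a k)

/-! Write `σ = s₁ + s₂ - d / 2`. In terms of `F = |·| ^ s₁ |a|` and `H = |·| ^ s₂ |b|` the estimate
is an `ℓ² × ℓ² → ℓ²` bound for the bilinear operator `∑_l K(k, l) F(l) H(k - l)` with kernel
`K(k, l) = |k| ^ σ |l| ^ (-s₁) |k - l| ^ (-s₂)`. Two Cauchy–Schwarz arguments give such a bound: one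
asks that the rows `∑_l K(k, l)²` be bounded, the other that the columns `∑_k K(k, l)²` be. When
`|l|` or `|k - l|` is at most `|k| / 2`, the other one is comparable to `|k|` and the rows are
bounded; otherwise `|k| ≲ |l| ∼ |k - l|` and the columns are. Since the exponents of `K²` sum to
`-d`, each of these three cases amounts to `∑_{0 < |x| ≤ R} |x| ^ p ≲ R ^ (p + d)` for `p + d > 0`,
where `p` is the exponent in `K²` of the factor that need not be comparable to the other two:
`p + d` is `d - 2 s₁`, `d - 2 s₂` or `2 (s₁ + s₂)`. Only the growth of balls is used, so `ℤ^d` may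
be replaced by any group with a norm of polynomial growth. -/

open scoped ENNReal

section BilinearSums

variable {ι G : Type*}

lemma sq_tsum_mul_le_tsum_sq_mul_tsum_sq (u v : ι → ℝ≥0∞) :
    (∑' i, u i * v i) ^ 2 ≤ (∑' i, u i ^ 2) * ∑' i, v i ^ 2 := by
  have holder : ∑' i, u i * v i ≤ (∑' i, u i ^ 2) ^ (1 / 2 : ℝ) * (∑' i, v i ^ 2) ^ (1 / 2 : ℝ) :=
    ENNReal.summable.tsum_le_of_sum_le fun S => by
      refine (ENNReal.inner_le_Lp_mul_Lq S u v Real.HolderConjugate.two_two).trans ?_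
      simp only [ENNReal.rpow_two]
      gcongr <;> exact ENNReal.sum_le_tsum S
  have sq_sqrt (x : ℝ≥0∞) : (x ^ (1 / 2 : ℝ)) ^ 2 = x := by
    rw [← ENNReal.rpow_mul_natCast]; norm_num
  calc (∑' i, u i * v i) ^ 2
      ≤ ((∑' i, u i ^ 2) ^ (1 / 2 : ℝ) * (∑' i, v i ^ 2) ^ (1 / 2 : ℝ)) ^ 2 := by gcongr
    _ = (∑' i, u i ^ 2) * ∑' i, v i ^ 2 := by rw [mul_pow, sq_sqrt, sq_sqrt]

variable [AddGroup G] {K : G → G → ℝ≥0∞} {C C₁ C₂ : ℝ≥0∞}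

lemma tsum_sq_tsum_kernel_le_of_row_le (hK : ∀ k, ∑' l, K k l ^ 2 ≤ C) (F H : G → ℝ≥0∞) :
    ∑' k, (∑' l, K k l * (F l * H (k - l))) ^ 2 ≤ C * ((∑' l, F l ^ 2) * ∑' m, H m ^ 2) := by
  have tsum_shift (l : G) : ∑' k, H (k - l) ^ 2 = ∑' m, H m ^ 2 :=
    (Equiv.subRight l).tsum_eq fun m => H m ^ 2
  calc ∑' k, (∑' l, K k l * (F l * H (k - l))) ^ 2
      ≤ ∑' k, C * ∑' l, (F l * H (k - l)) ^ 2 := by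
        gcongr with k
        exact (sq_tsum_mul_le_tsum_sq_mul_tsum_sq _ _).trans (by gcongr; exact hK k)
    _ = C * ∑' l, F l ^ 2 * ∑' k, H (k - l) ^ 2 := by
        simp only [mul_pow, ENNReal.tsum_mul_left]
        rw [ENNReal.tsum_comm]
        simp only [ENNReal.tsum_mul_left]
    _ = C * ((∑' l, F l ^ 2) * ∑' m, H m ^ 2) := by
        simp only [tsum_shift, ENNReal.tsum_mul_right]

lemma tsum_sq_tsum_kernel_le_of_col_le (hK : ∀ l, ∑' k, K k l ^ 2 ≤ C) (F H : G → ℝ≥0∞) :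
    ∑' k, (∑' l, K k l * (F l * H (k - l))) ^ 2 ≤ C * ((∑' l, F l ^ 2) * ∑' m, H m ^ 2) := by
  have tsum_reflect (k : G) : ∑' l, H (k - l) ^ 2 = ∑' m, H m ^ 2 :=
    (Equiv.subLeft k).tsum_eq fun m => H m ^ 2
  calc ∑' k, (∑' l, K k l * (F l * H (k - l))) ^ 2
      ≤ ∑' k, (∑' l, (K k l * F l) ^ 2) * ∑' l, H (k - l) ^ 2 := by
        gcongr with k
        simp only [← mul_assoc]
        exact sq_tsum_mul_le_tsum_sq_mul_tsum_sq _ _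
    _ = (∑' l, (∑' k, K k l ^ 2) * F l ^ 2) * ∑' m, H m ^ 2 := by
        simp only [tsum_reflect, mul_pow, ENNReal.tsum_mul_right]
        rw [ENNReal.tsum_comm]
        simp only [ENNReal.tsum_mul_right]
    _ ≤ (∑' l, C * F l ^ 2) * ∑' m, H m ^ 2 := by gcongr with l; exact hK l
    _ = C * ((∑' l, F l ^ 2) * ∑' m, H m ^ 2) := by rw [ENNReal.tsum_mul_left, mul_assoc]

lemma tsum_sq_tsum_kernel_le_of_row_le_of_col_le (S : G → G → Prop) [∀ k l, Decidable (S k l)]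
    (hrow : ∀ k, ∑' l, (if S k l then K k l ^ 2 else 0) ≤ C₁)
    (hcol : ∀ l, ∑' k, (if S k l then 0 else K k l ^ 2) ≤ C₂) (F H : G → ℝ≥0∞) :
    ∑' k, (∑' l, K k l * (F l * H (k - l))) ^ 2 ≤
      2 * (C₁ + C₂) * ((∑' l, F l ^ 2) * ∑' m, H m ^ 2) := by
  have add_sq_le (x y : ℝ≥0∞) : (x + y) ^ 2 ≤ 2 * (x ^ 2 + y ^ 2) := by
    simpa [show (2 : ℝ) - 1 = 1 by norm_num] using
      ENNReal.rpow_add_le_mul_rpow_add_rpow x y one_le_two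
  calc ∑' k, (∑' l, K k l * (F l * H (k - l))) ^ 2
      = ∑' k, (∑' l, (if S k l then K k l else 0) * (F l * H (k - l)) +
          ∑' l, (if S k l then 0 else K k l) * (F l * H (k - l))) ^ 2 := by
        simp only [← ENNReal.tsum_add, ← add_mul]
        congr! 6
        split_ifs <;> simp
    _ ≤ ∑' k, 2 * ((∑' l, (if S k l then K k l else 0) * (F l * H (k - l))) ^ 2 +
          (∑' l, (if S k l then 0 else K k l) * (F l * H (k - l))) ^ 2) := by
        gcongr
        exact add_sq_le _ _
    _ ≤ 2 * (C₁ * ((∑' l, F l ^ 2) * ∑' m, H m ^ 2) + C₂ * ((∑' l, F l ^ 2) * ∑' m, H m ^ 2)) := by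
        rw [ENNReal.tsum_mul_left, ENNReal.tsum_add]
        gcongr
        · exact tsum_sq_tsum_kernel_le_of_row_le (by simpa [ite_pow] using hrow) F H
        · exact tsum_sq_tsum_kernel_le_of_col_le (by simpa [ite_pow] using hcol) F H
    _ = 2 * (C₁ + C₂) * ((∑' l, F l ^ 2) * ∑' m, H m ^ 2) := by ring

end BilinearSums

lemma rpow_le_mul_rpow_of_le_mul_of_le_mul {x y M : ℝ≥0∞} (hM₀ : M ≠ 0) (hM : M ≠ ∞)
    (hxy : x ≤ M * y) (hyx : y ≤ M * x) (s : ℝ) : x ^ s ≤ M ^ |s| * y ^ s := by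
  have nonneg_case {x y : ℝ≥0∞} (h : x ≤ M * y) : x ^ |s| ≤ M ^ |s| * y ^ |s| := by
    rw [← ENNReal.mul_rpow_of_nonneg _ _ (abs_nonneg s)]
    exact ENNReal.rpow_le_rpow h (abs_nonneg s)
  rcases abs_choice s with hs | hs
  · simpa only [hs] using nonneg_case hxy
  · have hMs₀ : M ^ |s| ≠ 0 := (ENNReal.rpow_pos (pos_iff_ne_zero.2 hM₀) hM).ne'
    have hMs : M ^ |s| ≠ ∞ := ENNReal.rpow_ne_top_of_ne_zero hM₀ hM
    rw [← neg_neg s, ← hs, abs_neg, abs_abs, ENNReal.rpow_neg, ENNReal.rpow_neg]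
    calc (x ^ |s|)⁻¹ = M ^ |s| * (M ^ |s| * x ^ |s|)⁻¹ := by
          rw [ENNReal.mul_inv (.inl hMs₀) (.inl hMs), ← mul_assoc,
            ENNReal.mul_inv_cancel hMs₀ hMs, one_mul]
      _ ≤ M ^ |s| * (y ^ |s|)⁻¹ := by
          gcongr
          exact nonneg_case hyx

section NormWeight

variable {G : Type*} [AddGroup G] (N : AddGroupNorm G)

open scoped Classical in
/-- The weight `|x| ^ s` of a group norm. Its value at the origin is `0` for every `s`, so that a
weighted sum over `G` runs over the nonzero elements only. -/
noncomputable def normWeight (s : ℝ) (x : G) : ℝ≥0∞ :=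
  if x = 0 then 0 else ENNReal.ofReal (N x) ^ s

/-- The squared homogeneous Sobolev norm `∑_{x ≠ 0} |x| ^ (2s) f(x)²`, possibly infinite, of the
moduli `f` of a family of Fourier coefficients. -/
noncomputable def sobolevEnergy (s : ℝ) (f : G → ℝ≥0∞) : ℝ≥0∞ :=
  ∑' x, (normWeight N s x * f x) ^ 2

/-- Growth of order `D` of the punctured balls of a group norm. As radii below one are included,
this also keeps the nonzero elements away from the origin when `0 < D`. -/
def HasPolynomialGrowth (D : ℝ) : Prop :=
  ∃ A : ℝ≥0∞, A ≠ ∞ ∧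
    ∀ R : ℝ, ({x | x ≠ 0 ∧ N x ≤ R}.encard : ℝ≥0∞) ≤ A * ENNReal.ofReal R ^ D

@[simp]
lemma normWeight_zero (s : ℝ) : normWeight N s 0 = 0 := if_pos rfl

variable {N}

lemma normWeight_of_ne_zero (s : ℝ) {x : G} (hx : x ≠ 0) :
    normWeight N s x = ENNReal.ofReal (N x) ^ s := if_neg hx

lemma ofReal_apply_ne_zero {x : G} (hx : x ≠ 0) : ENNReal.ofReal (N x) ≠ 0 :=
  ENNReal.ofReal_ne_zero_iff.2 (map_pos_of_ne_zero N hx)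

lemma normWeight_ne_zero (s : ℝ) {x : G} (hx : x ≠ 0) : normWeight N s x ≠ 0 := by
  rw [normWeight_of_ne_zero s hx]
  exact (ENNReal.rpow_pos (pos_iff_ne_zero.2 (ofReal_apply_ne_zero hx)) ENNReal.ofReal_ne_top).ne'

lemma normWeight_mul_normWeight (s t : ℝ) (x : G) :
    normWeight N s x * normWeight N t x = normWeight N (s + t) x := by
  rcases eq_or_ne x 0 with rfl | hx
  · simp
  · simp only [normWeight_of_ne_zero _ hx,
      ENNReal.rpow_add s t (ofReal_apply_ne_zero hx) ENNReal.ofReal_ne_top]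

lemma normWeight_sq (s : ℝ) (x : G) : normWeight N s x ^ 2 = normWeight N (2 * s) x := by
  rw [sq, normWeight_mul_normWeight, two_mul]

lemma normWeight_exponent_zero {x : G} (hx : x ≠ 0) : normWeight N 0 x = 1 := by
  rw [normWeight_of_ne_zero 0 hx, ENNReal.rpow_zero]

lemma normWeight_exponent_zero_le_one (x : G) : normWeight N 0 x ≤ 1 := by
  rcases eq_or_ne x 0 with rfl | hx
  · simp
  · exact (normWeight_exponent_zero hx).le

lemma normWeight_neg (s : ℝ) (x : G) : normWeight N s (-x) = normWeight N s x := by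
  rcases eq_or_ne x 0 with rfl | hx
  · rw [neg_zero]
  · rw [normWeight_of_ne_zero s hx, normWeight_of_ne_zero s (neg_ne_zero.2 hx), map_neg_eq_map]

lemma normWeight_neg_mul_normWeight_mul {f : G → ℝ≥0∞} (hf : f 0 = 0) (s : ℝ) (x : G) :
    normWeight N (-s) x * (normWeight N s x * f x) = f x := by
  rcases eq_or_ne x 0 with rfl | hx
  · simp [hf]
  · rw [← mul_assoc, normWeight_mul_normWeight, neg_add_cancel, normWeight_exponent_zero hx,
      one_mul]

lemma normWeight_le_of_le_mul_of_le_mul {M : ℝ} (hM : 0 < M) {x y : G} (hxy : N x ≤ M * N y)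
    (hyx : N y ≤ M * N x) (s : ℝ) :
    normWeight N s x ≤ ENNReal.ofReal M ^ |s| * normWeight N s y := by
  rcases eq_or_ne x 0 with rfl | hx
  · simp
  have hy : y ≠ 0 := by
    rintro rfl
    exact (map_pos_of_ne_zero N hx).not_ge (by simpa using hxy)
  rw [normWeight_of_ne_zero s hx, normWeight_of_ne_zero s hy]
  refine rpow_le_mul_rpow_of_le_mul_of_le_mul (by simpa using hM) ENNReal.ofReal_ne_top ?_ ?_ s <;>
    rw [← ENNReal.ofReal_mul hM.le] <;> gcongr

lemma ite_normWeight_le_tsum_dyadic (p R : ℝ) (x : G) :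
    (if N x ≤ R then normWeight N p x else 0) ≤
      ∑' j : ℕ, {y | y ≠ 0 ∧ N y ≤ R * (1 / 2) ^ j}.indicator
        (fun _ => 2 ^ |p| * ENNReal.ofReal (R * (1 / 2) ^ j) ^ p) x := by
  rcases eq_or_ne x 0 with rfl | hx
  · simp
  split_ifs with hxR
  swap
  · exact zero_le
  have hx_pos : 0 < N x := map_pos_of_ne_zero N hx
  have hR : 0 < R := hx_pos.trans_le hxR
  obtain ⟨j, hj_lt, hj_le⟩ := exists_nat_pow_near_of_lt_one (div_pos hx_pos hR)
    ((div_le_one hR).2 hxR) one_half_pos one_half_lt_one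
  rw [lt_div_iff₀' hR, pow_succ] at hj_lt
  rw [div_le_iff₀' hR] at hj_le
  refine le_trans ?_ (ENNReal.le_tsum j)
  rw [Set.indicator_of_mem (show x ∈ {y | y ≠ 0 ∧ N y ≤ R * (1 / 2) ^ j} from ⟨hx, hj_le⟩),
    normWeight_of_ne_zero p hx]
  refine rpow_le_mul_rpow_of_le_mul_of_le_mul two_ne_zero ENNReal.ofNat_ne_top ?_ ?_ p <;>
    rw [← ENNReal.ofReal_ofNat, ← ENNReal.ofReal_mul zero_le_two] <;>
    exact ENNReal.ofReal_le_ofReal (by linarith)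

lemma sobolevEnergy_mono (s : ℝ) {f g : G → ℝ≥0∞} (hfg : ∀ x, f x ≤ g x) :
    sobolevEnergy N s f ≤ sobolevEnergy N s g := by
  unfold sobolevEnergy
  gcongr with x
  exact hfg x

lemma ne_top_of_sobolevEnergy_ne_top {s : ℝ} {f : G → ℝ≥0∞} (hf : sobolevEnergy N s f ≠ ∞) {x : G}
    (hx : x ≠ 0) : f x ≠ ∞ := by
  intro hfx
  refine ENNReal.ne_top_of_tsum_ne_top hf x ?_
  simp [hfx, ENNReal.mul_top (normWeight_ne_zero s hx)]

end NormWeight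

namespace HasPolynomialGrowth

variable {G : Type*} [AddGroup G] {N : AddGroupNorm G} {D p t : ℝ}

lemma exists_normWeight_neg_le (hN : HasPolynomialGrowth N D) (hD : 0 < D) (ht : 0 < t) :
    ∃ C : ℝ≥0∞, C ≠ ∞ ∧ ∀ x, normWeight N (-t) x ≤ C := by
  obtain ⟨A, hA, hcard⟩ := hN
  refine ⟨A ^ (t / D), ENNReal.rpow_ne_top_of_nonneg (by positivity) hA, fun x => ?_⟩
  rcases eq_or_ne x 0 with rfl | hx
  · simp
  have one_le : 1 ≤ A * ENNReal.ofReal (N x) ^ D := by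
    have hx_mem : x ∈ {y | y ≠ 0 ∧ N y ≤ N x} := ⟨hx, le_rfl⟩
    exact le_trans (by exact_mod_cast Set.one_le_encard_iff_nonempty.2 ⟨x, hx_mem⟩) (hcard (N x))
  rw [normWeight_of_ne_zero _ hx, ENNReal.rpow_neg, ← one_div]
  refine ENNReal.div_le_of_le_mul ?_
  calc 1 ≤ (A * ENNReal.ofReal (N x) ^ D) ^ (t / D) :=
        ENNReal.one_le_rpow one_le (by positivity)
    _ = A ^ (t / D) * ENNReal.ofReal (N x) ^ t := by
        rw [ENNReal.mul_rpow_of_nonneg _ _ (by positivity), ← ENNReal.rpow_mul,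
          mul_div_cancel₀ t hD.ne']

lemma exists_tsum_ball_normWeight_le (hN : HasPolynomialGrowth N D) (hp : 0 < p + D) :
    ∃ C : ℝ≥0∞, C ≠ ∞ ∧ ∀ R : ℝ,
      ∑' x, (if N x ≤ R then normWeight N p x else 0) ≤ C * ENNReal.ofReal R ^ (p + D) := by
  obtain ⟨A, hA, hcard⟩ := hN
  set r : ℝ≥0∞ := ENNReal.ofReal (1 / 2) ^ (p + D) with hr
  have hr_lt : r < 1 := ENNReal.rpow_lt_one (ENNReal.ofReal_lt_one.2 one_half_lt_one) hp
  have hgeom : (1 - r)⁻¹ ≠ ∞ := ENNReal.inv_ne_top.2 (tsub_pos_of_lt hr_lt).ne'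
  refine ⟨2 ^ |p| * A * (1 - r)⁻¹, by finiteness, fun R => ?_⟩
  have dyadic_radius (j : ℕ) : ENNReal.ofReal (R * (1 / 2) ^ j) ^ (p + D) =
      ENNReal.ofReal R ^ (p + D) * r ^ j := by
    rw [ENNReal.ofReal_mul' (by positivity), ENNReal.mul_rpow_of_nonneg _ _ hp.le, hr,
      ENNReal.ofReal_pow (by norm_num), ← ENNReal.rpow_natCast, ← ENNReal.rpow_natCast,
      ← ENNReal.rpow_mul, ← ENNReal.rpow_mul, mul_comm (j : ℝ)]
  calc ∑' x, (if N x ≤ R then normWeight N p x else 0)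
      ≤ ∑' x, ∑' j : ℕ, {y | y ≠ 0 ∧ N y ≤ R * (1 / 2) ^ j}.indicator
          (fun _ => 2 ^ |p| * ENNReal.ofReal (R * (1 / 2) ^ j) ^ p) x := by
        gcongr with x
        exact ite_normWeight_le_tsum_dyadic p R x
    _ = ∑' j : ℕ, ({y | y ≠ 0 ∧ N y ≤ R * (1 / 2) ^ j}.encard : ℝ≥0∞) *
          (2 ^ |p| * ENNReal.ofReal (R * (1 / 2) ^ j) ^ p) := by
        rw [ENNReal.tsum_comm]
        simp only [← tsum_subtype, ENNReal.tsum_set_const]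
    _ ≤ ∑' j : ℕ, A * ENNReal.ofReal (R * (1 / 2) ^ j) ^ D *
          (2 ^ |p| * ENNReal.ofReal (R * (1 / 2) ^ j) ^ p) := by
        gcongr with j
        exact hcard _
    _ = ∑' j : ℕ, 2 ^ |p| * A * (ENNReal.ofReal R ^ (p + D) * r ^ j) := by
        congr! 2 with j
        rw [← dyadic_radius, ENNReal.rpow_add_of_add_pos ENNReal.ofReal_ne_top p D hp]
        ring
    _ = 2 ^ |p| * A * (1 - r)⁻¹ * ENNReal.ofReal R ^ (p + D) := by
        rw [ENNReal.tsum_mul_left, ENNReal.tsum_mul_left, ENNReal.tsum_geometric]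
        ring

lemma exists_tsum_ball_normWeight_le_normWeight (hN : HasPolynomialGrowth N D) (hp : 0 < p + D)
    (M : ℝ) :
    ∃ C : ℝ≥0∞, C ≠ ∞ ∧ ∀ k : G,
      ∑' l, (if N l ≤ M * N k then normWeight N p l else 0) ≤ C * normWeight N (p + D) k := by
  obtain ⟨C, hC, hball⟩ := hN.exists_tsum_ball_normWeight_le hp
  have hM : ENNReal.ofReal M ^ (p + D) ≠ ∞ :=
    ENNReal.rpow_ne_top_of_nonneg hp.le ENNReal.ofReal_ne_top
  refine ⟨C * ENNReal.ofReal M ^ (p + D), by finiteness, fun k => ?_⟩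
  rcases eq_or_ne k 0 with rfl | hk
  · simpa [hp] using hball 0
  · calc ∑' l, (if N l ≤ M * N k then normWeight N p l else 0)
        ≤ C * ENNReal.ofReal (M * N k) ^ (p + D) := hball _
      _ = C * ENNReal.ofReal M ^ (p + D) * normWeight N (p + D) k := by
        rw [ENNReal.ofReal_mul' (apply_nonneg N k), ENNReal.mul_rpow_of_nonneg _ _ hp.le,
          normWeight_of_ne_zero _ hk, mul_assoc]

end HasPolynomialGrowth

section WeightKernel

variable {G : Type*} [AddGroup G]

/-- The kernel `|k| ^ p |l| ^ q |k - l| ^ r` of a weighted convolution, zero if `k`, `l` or `k - l`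
vanishes. -/
noncomputable def weightKernel (N : AddGroupNorm G) (p q r : ℝ) (k l : G) : ℝ≥0∞ :=
  normWeight N p k * normWeight N q l * normWeight N r (k - l)

variable {N : AddGroupNorm G} {D M p q r s t : ℝ}

lemma weightKernel_sq (p q r : ℝ) (k l : G) :
    weightKernel N p q r k l ^ 2 = weightKernel N (2 * p) (2 * q) (2 * r) k l := by
  simp only [weightKernel, mul_pow, normWeight_sq]

lemma normWeight_mul_tsum_mul_sub_eq {f g : G → ℝ≥0∞} (hf : f 0 = 0) (hg : g 0 = 0)
    (p q r : ℝ) (k : G) :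
    normWeight N p k * ∑' l, f l * g (k - l) =
      ∑' l, weightKernel N p (-q) (-r) k l *
        ((normWeight N q l * f l) * (normWeight N r (k - l) * g (k - l))) := by
  rw [← ENNReal.tsum_mul_left]
  refine tsum_congr fun l => ?_
  calc normWeight N p k * (f l * g (k - l))
      = normWeight N p k * ((normWeight N (-q) l * (normWeight N q l * f l)) *
          (normWeight N (-r) (k - l) * (normWeight N r (k - l) * g (k - l)))) := by
        rw [normWeight_neg_mul_normWeight_mul hf, normWeight_neg_mul_normWeight_mul hg]
    _ = weightKernel N p (-q) (-r) k l *
          ((normWeight N q l * f l) * (normWeight N r (k - l) * g (k - l))) := by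
        rw [weightKernel]; ring

namespace HasPolynomialGrowth

lemma exists_tsum_mul_normWeight_comparable_le (hN : HasPolynomialGrowth N D)
    (hpqr : p + q + r + D = 0) (hp : 0 < p + D) (hM : 0 < M) :
    ∃ C : ℝ≥0∞, C ≠ ∞ ∧ ∀ (x : G) (z : G → G) (S : Set G) [DecidablePred (· ∈ S)],
      (∀ y ∈ S, N y ≤ M * N x ∧ N (z y) ≤ M * N x ∧ N x ≤ M * N (z y)) →
      ∑' y, (if y ∈ S then normWeight N p y * normWeight N q x * normWeight N r (z y) else 0) ≤
        C := by
  obtain ⟨C, hC, hball⟩ := hN.exists_tsum_ball_normWeight_le_normWeight hp M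
  set B : ℝ≥0∞ := ENNReal.ofReal M ^ |r|
  have hB : B ≠ ∞ := ENNReal.rpow_ne_top_of_nonneg (abs_nonneg r) ENNReal.ofReal_ne_top
  refine ⟨B * C, by finiteness, fun x z S _ hS => ?_⟩
  calc ∑' y, (if y ∈ S then normWeight N p y * normWeight N q x * normWeight N r (z y) else 0)
      ≤ ∑' y, B * normWeight N (q + r) x * (if N y ≤ M * N x then normWeight N p y else 0) := by
        gcongr with y
        split_ifs with hyS hyx
        · obtain ⟨-, hzx, hxz⟩ := hS y hyS
          calc normWeight N p y * normWeight N q x * normWeight N r (z y)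
              ≤ normWeight N p y * normWeight N q x * (B * normWeight N r x) := by
                gcongr
                exact normWeight_le_of_le_mul_of_le_mul hM hzx hxz r
            _ = B * normWeight N (q + r) x * normWeight N p y := by
                rw [← normWeight_mul_normWeight q r]; ring
        · exact absurd (hS y hyS).1 hyx
        all_goals exact zero_le
    _ ≤ B * normWeight N (q + r) x * (C * normWeight N (p + D) x) := by
        rw [ENNReal.tsum_mul_left]
        gcongr
        exact hball x
    _ = B * C * normWeight N 0 x := by
        rw [show (0 : ℝ) = (q + r) + (p + D) by linarith, ← normWeight_mul_normWeight (q + r)]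
        ring
    _ ≤ B * C := mul_le_of_le_one_right' (normWeight_exponent_zero_le_one x)

lemma exists_row_le_of_near_zero (hN : HasPolynomialGrowth N D) (hpqr : p + q + r + D = 0)
    (hq : 0 < q + D) :
    ∃ C : ℝ≥0∞, C ≠ ∞ ∧
      ∀ k, ∑' l, (if 2 * N l ≤ N k then weightKernel N p q r k l else 0) ≤ C := by
  obtain ⟨C, hC, hsum⟩ := hN.exists_tsum_mul_normWeight_comparable_le
    (show q + p + r + D = 0 by linarith) hq two_pos
  refine ⟨C, hC, fun k => ?_⟩
  simpa only [weightKernel, mul_comm (normWeight N p k), Set.mem_ofPred_eq] using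
    hsum k (fun l => k - l) {l | 2 * N l ≤ N k} fun l (hl : 2 * N l ≤ N k) => by
      have h_sub_le : N (k - l) ≤ N k + N l := map_sub_le_add N k l
      have h_le_sub : N k ≤ N (k - l) + N l := by simpa using map_add_le_add N (k - l) l
      refine ⟨?_, ?_, ?_⟩ <;> linarith [apply_nonneg N l]

lemma exists_row_le_of_near_self (hN : HasPolynomialGrowth N D) (hpqr : p + q + r + D = 0)
    (hr : 0 < r + D) :
    ∃ C : ℝ≥0∞, C ≠ ∞ ∧
      ∀ k, ∑' l, (if 2 * N (k - l) ≤ N k then weightKernel N p q r k l else 0) ≤ C := by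
  obtain ⟨C, hC, hsum⟩ := hN.exists_tsum_mul_normWeight_comparable_le
    (show r + p + q + D = 0 by linarith) hr two_pos
  refine ⟨C, hC, fun k => ?_⟩
  rw [← (Equiv.subLeft k).symm.tsum_eq]
  have h_sub (m : G) : k - (-m + k) = m := by simp [sub_eq_add_neg]
  have h_rotate (m : G) : weightKernel N p q r k (-m + k) =
      normWeight N r m * normWeight N p k * normWeight N q (-m + k) := by
    rw [weightKernel, h_sub]; ring
  simpa only [Equiv.subLeft_symm_apply, h_sub, h_rotate, Set.mem_ofPred_eq] using
    hsum k (fun m => -m + k) {m | 2 * N m ≤ N k} fun m (hm : 2 * N m ≤ N k) => by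
      have h_add_le : N (-m + k) ≤ N m + N k := by simpa using map_add_le_add N (-m) k
      have h_le_add : N k ≤ N m + N (-m + k) := by simpa using map_add_le_add N m (-m + k)
      refine ⟨?_, ?_, ?_⟩ <;> linarith [apply_nonneg N m]

lemma exists_col_le_of_far (hN : HasPolynomialGrowth N D) (hpqr : p + q + r + D = 0)
    (hp : 0 < p + D) :
    ∃ C : ℝ≥0∞, C ≠ ∞ ∧ ∀ l, ∑' k,
      (if 2 * N l ≤ N k ∨ 2 * N (k - l) ≤ N k then 0 else weightKernel N p q r k l) ≤ C := by
  obtain ⟨C, hC, hsum⟩ := hN.exists_tsum_mul_normWeight_comparable_le hpqr hp three_pos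
  refine ⟨C, hC, fun l => ?_⟩
  simpa only [weightKernel, ite_not, Set.mem_ofPred_eq] using
    hsum l (fun k => k - l) {k | ¬(2 * N l ≤ N k ∨ 2 * N (k - l) ≤ N k)} fun k hk => by
      obtain ⟨hlk, hmk⟩ : N k < 2 * N l ∧ N k < 2 * N (k - l) := by simpa using hk
      have h_sub_le : N (k - l) ≤ N k + N l := map_sub_le_add N k l
      have h_le_sub : N l ≤ N (k - l) + N k := by
        simpa [map_sub_rev] using map_add_le_add N (l - k) k
      refine ⟨?_, ?_, ?_⟩ <;> linarith

lemma exists_tsum_sq_tsum_weightKernel_le (hN : HasPolynomialGrowth N D)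
    (hpqr : 2 * p + 2 * q + 2 * r + D = 0) (hp : 0 < 2 * p + D) (hq : 0 < 2 * q + D)
    (hr : 0 < 2 * r + D) :
    ∃ C : ℝ≥0∞, C ≠ ∞ ∧ ∀ F H : G → ℝ≥0∞,
      ∑' k, (∑' l, weightKernel N p q r k l * (F l * H (k - l))) ^ 2 ≤
        C * ((∑' l, F l ^ 2) * ∑' m, H m ^ 2) := by
  obtain ⟨C₁, hC₁, hnear₀⟩ := hN.exists_row_le_of_near_zero hpqr hq
  obtain ⟨C₂, hC₂, hnear⟩ := hN.exists_row_le_of_near_self hpqr hr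
  obtain ⟨C₃, hC₃, hfar⟩ := hN.exists_col_le_of_far hpqr hp
  refine ⟨2 * (C₁ + C₂ + C₃), by finiteness, fun F H =>
    tsum_sq_tsum_kernel_le_of_row_le_of_col_le (fun k l => 2 * N l ≤ N k ∨ 2 * N (k - l) ≤ N k)
      (fun k => ?_) (fun l => ?_) F H⟩
  · simp only [weightKernel_sq]
    refine le_trans ?_ (add_le_add (hnear₀ k) (hnear k))
    rw [← ENNReal.tsum_add]
    gcongr with l
    split_ifs <;> simp_all
  · simpa only [weightKernel_sq] using hfar l

theorem exists_sobolevEnergy_tsum_mul_sub_le (hN : HasPolynomialGrowth N D)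
    (hs : s < D / 2) (ht : t < D / 2) (hst : 0 < s + t) :
    ∃ C : ℝ≥0∞, C ≠ ∞ ∧ ∀ f g : G → ℝ≥0∞, f 0 = 0 → g 0 = 0 →
      sobolevEnergy N (s + t - D / 2) (fun k => ∑' l, f l * g (k - l)) ≤
        C * (sobolevEnergy N s f * sobolevEnergy N t g) := by
  obtain ⟨C, hC, hkernel⟩ := hN.exists_tsum_sq_tsum_weightKernel_le
    (p := s + t - D / 2) (q := -s) (r := -t) (by ring) (by linarith) (by linarith) (by linarith)
  refine ⟨C, hC, fun f g hf hg => ?_⟩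
  simp only [sobolevEnergy, normWeight_mul_tsum_mul_sub_eq hf hg _ s t]
  exact hkernel _ _

-- The homogeneous energy does not see the coefficient of a convolution at the origin, whose
-- finiteness therefore needs a bound of its own.
lemma exists_sq_tsum_mul_neg_le (hN : HasPolynomialGrowth N D) (hD : 0 < D) (hst : 0 < s + t) :
    ∃ C : ℝ≥0∞, C ≠ ∞ ∧ ∀ f g : G → ℝ≥0∞, f 0 = 0 → g 0 = 0 →
      (∑' l, f l * g (-l)) ^ 2 ≤ C * (sobolevEnergy N s f * sobolevEnergy N t g) := by
  obtain ⟨C, hC, hweight⟩ := hN.exists_normWeight_neg_le hD hst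
  refine ⟨C ^ 2, by finiteness, fun f g hf hg => ?_⟩
  have h_term (l : G) :
      f l * g (-l) ≤ C * ((normWeight N s l * f l) * (normWeight N t (-l) * g (-l))) := by
    calc f l * g (-l)
        = (normWeight N (-s) l * (normWeight N s l * f l)) *
            (normWeight N (-t) (-l) * (normWeight N t (-l) * g (-l))) := by
          rw [normWeight_neg_mul_normWeight_mul hf, normWeight_neg_mul_normWeight_mul hg]
      _ = normWeight N (-(s + t)) l *
            ((normWeight N s l * f l) * (normWeight N t (-l) * g (-l))) := by
          rw [normWeight_neg (-t), neg_add, ← normWeight_mul_normWeight]; ring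
      _ ≤ C * ((normWeight N s l * f l) * (normWeight N t (-l) * g (-l))) := by
          gcongr
          exact hweight l
  have h_reflect : ∑' l, (normWeight N t (-l) * g (-l)) ^ 2 = sobolevEnergy N t g :=
    (Equiv.neg G).tsum_eq fun l => (normWeight N t l * g l) ^ 2
  calc (∑' l, f l * g (-l)) ^ 2
      ≤ (C * ∑' l, (normWeight N s l * f l) * (normWeight N t (-l) * g (-l))) ^ 2 := by
        rw [← ENNReal.tsum_mul_left]
        exact pow_le_pow_left' (ENNReal.tsum_le_tsum h_term) 2
    _ ≤ C ^ 2 * ((∑' l, (normWeight N s l * f l) ^ 2) *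
          ∑' l, (normWeight N t (-l) * g (-l)) ^ 2) := by
        rw [mul_pow]
        gcongr
        exact sq_tsum_mul_le_tsum_sq_mul_tsum_sq _ _
    _ = C ^ 2 * (sobolevEnergy N s f * sobolevEnergy N t g) := by
        rw [h_reflect]; rfl

lemma tsum_mul_sub_ne_top (hN : HasPolynomialGrowth N D)
    (hs : s < D / 2) (ht : t < D / 2) (hst : 0 < s + t) {f g : G → ℝ≥0∞} (hf₀ : f 0 = 0)
    (hg₀ : g 0 = 0) (hf : sobolevEnergy N s f ≠ ∞) (hg : sobolevEnergy N t g ≠ ∞) (k : G) :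
    ∑' l, f l * g (k - l) ≠ ∞ := by
  rcases eq_or_ne k 0 with rfl | hk
  · obtain ⟨C, hC, hzero⟩ := hN.exists_sq_tsum_mul_neg_le (by linarith) hst
    have h_sq := ne_top_of_le_ne_top (by finiteness) (hzero f g hf₀ hg₀)
    simpa using h_sq
  · obtain ⟨C, hC, henergy⟩ := hN.exists_sobolevEnergy_tsum_mul_sub_le hs ht hst
    exact ne_top_of_sobolevEnergy_ne_top
      (ne_top_of_le_ne_top (by finiteness) (henergy f g hf₀ hg₀)) hk

end HasPolynomialGrowth

end WeightKernel

section Lattice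

variable {d : ℕ}

/-- The Euclidean norm on `ℤ^d`. The type `Fin d → ℤ` itself carries the supremum norm. -/
noncomputable def latticeNorm (d : ℕ) : AddGroupNorm (Fin d → ℤ) where
  toFun k := ‖WithLp.toLp 2 fun i => (k i : ℝ)‖
  map_zero' := by simp [← Pi.zero_def]
  add_le' k l := by
    simpa [← WithLp.toLp_add, Pi.add_def] using
      norm_add_le (WithLp.toLp 2 fun i => (k i : ℝ)) (WithLp.toLp 2 fun i => (l i : ℝ))
  neg' k := by
    simpa [← WithLp.toLp_neg, Pi.neg_def] using norm_neg (WithLp.toLp 2 fun i => (k i : ℝ))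
  eq_zero_of_map_eq_zero' k hk := by
    ext i
    simpa using congrArg (fun v : EuclideanSpace ℝ (Fin d) => v i) (norm_eq_zero.1 hk)

lemma latticeNorm_sq (k : Fin d → ℤ) : latticeNorm d k ^ 2 = ∑ i, (k i : ℝ) ^ 2 :=
  EuclideanSpace.real_norm_sq_eq _

lemma abs_coord_le_latticeNorm (k : Fin d → ℤ) (i : Fin d) : |(k i : ℝ)| ≤ latticeNorm d k :=
  PiLp.norm_apply_le (WithLp.toLp 2 fun i => (k i : ℝ)) i

lemma one_le_latticeNorm {k : Fin d → ℤ} (hk : k ≠ 0) : 1 ≤ latticeNorm d k := by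
  obtain ⟨i, hi⟩ := Function.ne_iff.1 hk
  exact le_trans (by exact_mod_cast Int.one_le_abs hi) (abs_coord_le_latticeNorm k i)

lemma sobolevWeight_eq_latticeNorm_rpow (s : ℝ) (k : Fin d → ℤ) :
    sobolevWeight s k = latticeNorm d k ^ (2 * s) := by
  rw [sobolevWeight, ← latticeNorm_sq, ← Real.rpow_natCast_mul (apply_nonneg _ k), Nat.cast_ofNat]

lemma encard_latticeNorm_le_le {R : ℝ} (hR : 1 ≤ R) :
    ({k | latticeNorm d k ≤ R}.encard : ℝ≥0∞) ≤ ENNReal.ofReal (3 * R) ^ d := by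
  have h_floor : 0 ≤ ⌊R⌋ := Int.floor_nonneg.2 (by positivity)
  have h_box : {k | latticeNorm d k ≤ R} ⊆
      (Fintype.piFinset fun _ : Fin d => Finset.Icc (-⌊R⌋) ⌊R⌋ : Set (Fin d → ℤ)) := by
    intro k hk
    simp only [Finset.mem_coe, Fintype.mem_piFinset, Finset.mem_Icc, ← abs_le]
    exact fun i => Int.le_floor.2
      (by exact_mod_cast (abs_coord_le_latticeNorm k i).trans hk)
  have h_side : ((Finset.Icc (-⌊R⌋) ⌊R⌋).card : ℝ≥0∞) ≤ ENNReal.ofReal (3 * R) := by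
    have h_card : ((Finset.Icc (-⌊R⌋) ⌊R⌋).card : ℤ) = 2 * ⌊R⌋ + 1 := by
      rw [Int.card_Icc, Int.toNat_of_nonneg (by lia)]; ring
    rw [← ENNReal.ofReal_natCast]
    refine ENNReal.ofReal_le_ofReal ?_
    calc ((Finset.Icc (-⌊R⌋) ⌊R⌋).card : ℝ) = 2 * ⌊R⌋ + 1 := by exact_mod_cast h_card
      _ ≤ 3 * R := by linarith [Int.floor_le R]
  calc ({k | latticeNorm d k ≤ R}.encard : ℝ≥0∞)
      ≤ ((Finset.Icc (-⌊R⌋) ⌊R⌋).card : ℝ≥0∞) ^ d := by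
        have h_encard := Set.encard_le_encard h_box
        rw [Set.encard_coe_eq_coe_finsetCard, Fintype.card_piFinset_const] at h_encard
        exact_mod_cast h_encard
    _ ≤ ENNReal.ofReal (3 * R) ^ d := by gcongr

lemma hasPolynomialGrowth_latticeNorm (d : ℕ) : HasPolynomialGrowth (latticeNorm d) d := by
  refine ⟨3 ^ d, by finiteness, fun R => ?_⟩
  rcases lt_or_ge R 1 with hR | hR
  · have h_empty : {k | k ≠ 0 ∧ latticeNorm d k ≤ R} = ∅ :=
      Set.eq_empty_of_forall_notMem fun k hk => (hk.2.trans_lt hR).not_ge (one_le_latticeNorm hk.1)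
    simp [h_empty]
  · have h_subset : {k | k ≠ 0 ∧ latticeNorm d k ≤ R} ⊆ {k | latticeNorm d k ≤ R} :=
      fun _ => And.right
    calc ({k | k ≠ 0 ∧ latticeNorm d k ≤ R}.encard : ℝ≥0∞)
        ≤ ({k | latticeNorm d k ≤ R}.encard : ℝ≥0∞) := by
          exact_mod_cast Set.encard_le_encard h_subset
      _ ≤ ENNReal.ofReal (3 * R) ^ d := encard_latticeNorm_le_le hR
      _ = 3 ^ d * ENNReal.ofReal R ^ (d : ℝ) := by
          rw [ENNReal.ofReal_mul zero_le_three, mul_pow, ENNReal.rpow_natCast, ENNReal.ofReal_ofNat]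

lemma sobolevSummand_nonneg (s : ℝ) (a : (Fin d → ℤ) → ℂ) (k : {k : Fin d → ℤ // k ≠ 0}) :
    0 ≤ sobolevSummand s a k := by
  rw [sobolevSummand, sobolevWeight]
  positivity

lemma enorm_sobolevSummand (s : ℝ) (a : (Fin d → ℤ) → ℂ) (k : {k : Fin d → ℤ // k ≠ 0}) :
    ‖sobolevSummand s a k‖ₑ = (normWeight (latticeNorm d) s k * ‖a k‖ₑ) ^ 2 := by
  rw [Real.enorm_of_nonneg (sobolevSummand_nonneg s a k), sobolevSummand,
    ENNReal.ofReal_mul' (sq_nonneg _), ENNReal.ofReal_pow (norm_nonneg _), ofReal_norm, mul_pow,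
    normWeight_sq, normWeight_of_ne_zero _ k.2, sobolevWeight_eq_latticeNorm_rpow,
    ENNReal.ofReal_rpow_of_pos (map_pos_of_ne_zero _ k.2)]

lemma tsum_enorm_sobolevSummand (s : ℝ) (a : (Fin d → ℤ) → ℂ) :
    ∑' k, ‖sobolevSummand s a k‖ₑ = sobolevEnergy (latticeNorm d) s fun k => ‖a k‖ₑ := by
  simp only [enorm_sobolevSummand]
  refine tsum_subtype_eq_of_support_subset (s := {k : Fin d → ℤ | k ≠ 0})
    (f := fun k => (normWeight (latticeNorm d) s k * ‖a k‖ₑ) ^ 2) fun k hk => ?_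
  rintro rfl
  simp at hk

lemma summable_sobolevSummand_iff (s : ℝ) (a : (Fin d → ℤ) → ℂ) :
    Summable (sobolevSummand s a) ↔
      sobolevEnergy (latticeNorm d) s (fun k => ‖a k‖ₑ) ≠ ∞ := by
  rw [← tsum_enorm_sobolevSummand, tsum_enorm_ne_top_iff_summable_norm, summable_norm_iff]

lemma sobolevNorm_eq_sqrt_toReal (s : ℝ) (a : (Fin d → ℤ) → ℂ) :
    sobolevNorm s a = √(sobolevEnergy (latticeNorm d) s fun k => ‖a k‖ₑ).toReal := by
  rw [sobolevNorm, ← tsum_enorm_sobolevSummand, ENNReal.tsum_toReal_eq fun _ => enorm_ne_top]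
  simp only [toReal_enorm, Real.norm_of_nonneg (sobolevSummand_nonneg s a _)]

end Lattice

/-- **Sobolev product estimate on the torus, Fourier form.**
If `s₁, s₂ < d/2` and `s₁ + s₂ > 0`, then there is a constant `C > 0`, depending only
on `d, s₁, s₂`, such that for all zero-mean Fourier coefficient sequences
`a ∈ H^{s₁}`, `b ∈ H^{s₂}`, the convolution `c(k) = Σ_l a(l) b(k-l)` converges
absolutely for every `k` and `‖c‖_{H^{s₁+s₂-d/2}} ≤ C ‖a‖_{H^{s₁}} ‖b‖_{H^{s₂}}`. -/
theorem sobolev_product_estimate (d : ℕ) (hd : 1 ≤ d) (s₁ s₂ : ℝ)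
    (hs₁ : s₁ < d / 2) (hs₂ : s₂ < d / 2) (hs : 0 < s₁ + s₂) :
    ∃ C > (0 : ℝ), ∀ a b : (Fin d → ℤ) → ℂ,
      a 0 = 0 → b 0 = 0 →
      Summable (sobolevSummand s₁ a) →
      Summable (sobolevSummand s₂ b) →
      (∀ k : Fin d → ℤ, Summable (fun l : Fin d → ℤ => a l * b (k - l))) ∧
      Summable (sobolevSummand (s₁ + s₂ - d / 2)
        (fun k => ∑' l : Fin d → ℤ, a l * b (k - l))) ∧
      sobolevNorm (s₁ + s₂ - d / 2) (fun k => ∑' l : Fin d → ℤ, a l * b (k - l)) ≤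
        C * sobolevNorm s₁ a * sobolevNorm s₂ b := by
  have hN := hasPolynomialGrowth_latticeNorm d
  obtain ⟨C, hC, hprod⟩ := hN.exists_sobolevEnergy_tsum_mul_sub_le hs₁ hs₂ hs
  refine ⟨√C.toReal + 1, by positivity, fun a b ha hb hsa hsb => ?_⟩
  rw [summable_sobolevSummand_iff] at hsa hsb
  have h_conv : sobolevEnergy (latticeNorm d) (s₁ + s₂ - d / 2)
      (fun k => ‖∑' l, a l * b (k - l)‖ₑ) ≤
      C * (sobolevEnergy (latticeNorm d) s₁ (fun k => ‖a k‖ₑ) *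
        sobolevEnergy (latticeNorm d) s₂ (fun k => ‖b k‖ₑ)) := by
    refine (sobolevEnergy_mono _ fun k => ?_).trans (hprod _ _ (by simp [ha]) (by simp [hb]))
    simpa only [enorm_mul] using enorm_tsum_le_tsum_enorm (f := fun l => a l * b (k - l))
  refine ⟨fun k => ?_, ?_, ?_⟩
  · rw [← summable_norm_iff, ← tsum_enorm_ne_top_iff_summable_norm]
    simpa only [enorm_mul] using
      hN.tsum_mul_sub_ne_top hs₁ hs₂ hs (by simp [ha]) (by simp [hb]) hsa hsb k
  · rw [summable_sobolevSummand_iff]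
    exact ne_top_of_le_ne_top (by finiteness) h_conv
  · simp only [sobolevNorm_eq_sqrt_toReal]
    refine (Real.sqrt_le_sqrt (ENNReal.toReal_mono (by finiteness) h_conv)).trans ?_
    rw [ENNReal.toReal_mul, ENNReal.toReal_mul, Real.sqrt_mul ENNReal.toReal_nonneg,
      Real.sqrt_mul ENNReal.toReal_nonneg, ← mul_assoc]
    gcongr
    exact le_add_of_nonneg_right zero_le_one
end

section
/- Quantitative decay bound from the proof of Theorem 1.2: Let κ > 0, λ > 0, c > 0, M > 0, and let y : [0,1] → ℝ be continuous, nonnegative, differentiable on (0,1), with y(0) ≤ M and y′(t) ≤ −κ·y(t)² / (M·(e^{−2λt} + c²)) for all t ∈ (0,1). Then for every t ∈ [0,1] one has y(t) ≤ M / (1 + (κ/(2λc²))·log((c²·e^{2λt} + 1)/(c² + 1))). -/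
/-!
Wherever `y > 0`, the Riccati inequality `y' ≤ -G' y²` says that `1 / y - G` is nondecreasing, so an
upper bound on `y` at time `a` yields one at time `b`. Since `y` is nonincreasing, `y b > 0` forces
`y > 0` on all of `[a, b]`; if `y b ≤ 0` there is nothing to prove.
-/

open Set

section Riccati

variable {y y' G G' : ℝ → ℝ}

theorem antitoneOn_of_deriv_le_neg_mul_sq {D : Set ℝ} (hD : Convex ℝ D)
    (hy_cont : ContinuousOn y D) (hy : ∀ t ∈ interior D, HasDerivAt y (y' t) t)
    (hG'_nonneg : ∀ t ∈ interior D, 0 ≤ G' t)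
    (hy' : ∀ t ∈ interior D, y' t ≤ -(G' t * y t ^ 2)) :
    AntitoneOn y D :=
  antitoneOn_of_hasDerivWithinAt_nonpos hD hy_cont (fun t ht => (hy t ht).hasDerivWithinAt)
    fun t ht => (hy' t ht).trans (neg_nonpos.2 (mul_nonneg (hG'_nonneg t ht) (sq_nonneg _)))

theorem monotoneOn_inv_sub_of_deriv_le_neg_mul_sq {D : Set ℝ} (hD : Convex ℝ D)
    (hy_cont : ContinuousOn y D) (hG_cont : ContinuousOn G D)
    (hy : ∀ t ∈ interior D, HasDerivAt y (y' t) t) (hG : ∀ t ∈ interior D, HasDerivAt G (G' t) t)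
    (hy_ne : ∀ t ∈ D, y t ≠ 0) (hy' : ∀ t ∈ interior D, y' t ≤ -(G' t * y t ^ 2)) :
    MonotoneOn (fun t => (y t)⁻¹ - G t) D := by
  have hy_ne' : ∀ t ∈ interior D, y t ≠ 0 := fun t ht => hy_ne t (interior_subset ht)
  refine monotoneOn_of_hasDerivWithinAt_nonneg (f' := fun t => -y' t / y t ^ 2 - G' t) hD
    ((hy_cont.inv₀ hy_ne).sub hG_cont)
    (fun t ht => (((hy t ht).inv (hy_ne' t ht)).sub (hG t ht)).hasDerivWithinAt) fun t ht => ?_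
  have hsq : 0 < y t ^ 2 := sq_pos_of_ne_zero (hy_ne' t ht)
  rw [sub_nonneg, le_div_iff₀ hsq]
  exact le_neg_of_le_neg (hy' t ht)

theorem le_div_one_add_mul_sub_of_deriv_le_neg_mul_sq {a b M : ℝ} (hab : a ≤ b) (hM : 0 ≤ M)
    (hy_cont : ContinuousOn y (Icc a b)) (hG_cont : ContinuousOn G (Icc a b))
    (hy : ∀ t ∈ Ioo a b, HasDerivAt y (y' t) t) (hG : ∀ t ∈ Ioo a b, HasDerivAt G (G' t) t)
    (hG'_nonneg : ∀ t ∈ Ioo a b, 0 ≤ G' t) (hya : y a ≤ M)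
    (hy' : ∀ t ∈ Ioo a b, y' t ≤ -(G' t * y t ^ 2)) :
    y b ≤ M / (1 + M * (G b - G a)) := by
  have ha : a ∈ Icc a b := left_mem_Icc.2 hab
  have hb : b ∈ Icc a b := right_mem_Icc.2 hab
  rw [← interior_Icc] at hy hG hG'_nonneg hy'
  have hG_le : 0 ≤ G b - G a := sub_nonneg.2 <|
    monotoneOn_of_hasDerivWithinAt_nonneg (convex_Icc a b) hG_cont
      (fun t ht => (hG t ht).hasDerivWithinAt) hG'_nonneg ha hb hab
  rcases le_or_gt (y b) 0 with hyb | hyb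
  · exact hyb.trans (by positivity)
  have hy_pos : ∀ t ∈ Icc a b, 0 < y t := fun t ht => hyb.trans_le <|
    antitoneOn_of_deriv_le_neg_mul_sq (convex_Icc a b) hy_cont hy hG'_nonneg hy' ht hb ht.2
  have hM_pos : 0 < M := (hy_pos a ha).trans_le hya
  have h_inv : M⁻¹ + (G b - G a) ≤ (y b)⁻¹ := by
    have h_mono : (y a)⁻¹ - G a ≤ (y b)⁻¹ - G b :=
      monotoneOn_inv_sub_of_deriv_le_neg_mul_sq (convex_Icc a b) hy_cont hG_cont hy hG
        (fun t ht => (hy_pos t ht).ne') hy' ha hb hab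
    have h_init : M⁻¹ ≤ (y a)⁻¹ := inv_anti₀ (hy_pos a ha) hya
    linarith
  calc y b ≤ (M⁻¹ + (G b - G a))⁻¹ := le_inv_of_le_inv₀ (by positivity) h_inv
    _ = M / (1 + M * (G b - G a)) := by field_simp

end Riccati

/-- The primitive of `t ↦ 1 / (exp (-2 * lam * t) + c ^ 2)` vanishing at `0`, in closed form.
In the decay theorem `M / y` grows by at least `κ` times this profile.
If `lam = 0` or `c = 0`, division by zero makes it `0` instead of the primitive. -/
noncomputable def dissipationProfile (lam c t : ℝ) : ℝ :=
  Real.log ((c ^ 2 * Real.exp (2 * lam * t) + 1) / (c ^ 2 + 1)) / (2 * lam * c ^ 2)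

namespace dissipationProfile

theorem apply_zero (lam c : ℝ) : dissipationProfile lam c 0 = 0 := by
  have hc : c ^ 2 + 1 ≠ 0 := by positivity
  simp [dissipationProfile, hc]

theorem hasDerivAt {lam c : ℝ} (hlam : lam ≠ 0) (hc : c ≠ 0) (t : ℝ) :
    HasDerivAt (dissipationProfile lam c) (1 / (Real.exp (-2 * lam * t) + c ^ 2)) t := by
  have h_exp : HasDerivAt (fun s => Real.exp (2 * lam * s))
      (Real.exp (2 * lam * t) * (2 * lam)) t :=
    (hasDerivAt_const_mul (2 * lam)).exp
  have h_arg_ne : (c ^ 2 * Real.exp (2 * lam * t) + 1) / (c ^ 2 + 1) ≠ 0 := by positivity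
  have h_exp_neg : Real.exp (-2 * lam * t) = (Real.exp (2 * lam * t))⁻¹ := by
    rw [← Real.exp_neg, neg_mul, neg_mul]
  refine (((((h_exp.const_mul (c ^ 2)).add_const 1).div_const (c ^ 2 + 1)).log
    h_arg_ne).div_const (2 * lam * c ^ 2)).congr_deriv ?_
  rw [h_exp_neg]
  field_simp
  ring

end dissipationProfile

theorem enhanced_dissipation_decay_general {κ lam c M T : ℝ} (hκ : 0 ≤ κ) (hlam : lam ≠ 0)
    (hc : c ≠ 0) (hM : 0 < M) {y y' : ℝ → ℝ} (hy_cont : ContinuousOn y (Icc 0 T)) (hy0 : y 0 ≤ M)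
    (hy_deriv : ∀ t ∈ Ioo 0 T, HasDerivAt y (y' t) t)
    (hy_ineq : ∀ t ∈ Ioo 0 T,
      y' t ≤ -κ * y t ^ 2 / (M * (Real.exp (-2 * lam * t) + c ^ 2))) :
    ∀ t ∈ Icc 0 T,
      y t ≤ M / (1 + κ / (2 * lam * c ^ 2) *
        Real.log ((c ^ 2 * Real.exp (2 * lam * t) + 1) / (c ^ 2 + 1))) := by
  intro t ht
  have h_sub : Ioo 0 t ⊆ Ioo 0 T := Ioo_subset_Ioo_right ht.2
  have hG (s : ℝ) := (dissipationProfile.hasDerivAt hlam hc s).const_mul (κ / M)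
  have h_decay := le_div_one_add_mul_sub_of_deriv_le_neg_mul_sq ht.1 hM.le
    (hy_cont.mono (Icc_subset_Icc_right ht.2))
    (fun s _ => (hG s).continuousAt.continuousWithinAt)
    (fun s hs => hy_deriv s (h_sub hs)) (fun s _ => hG s) (fun s _ => by positivity) hy0
    (fun s hs => (hy_ineq s (h_sub hs)).trans_eq (by field_simp))
  have h_profile : M * (κ / M * dissipationProfile lam c t - κ / M * dissipationProfile lam c 0) =
      κ / (2 * lam * c ^ 2) *
        Real.log ((c ^ 2 * Real.exp (2 * lam * t) + 1) / (c ^ 2 + 1)) := by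
    rw [dissipationProfile.apply_zero, dissipationProfile]
    field_simp
    ring
  rwa [h_profile] at h_decay

/-- **Quantitative decay bound from the proof of Theorem 1.2.**
Let `κ > 0`, `λ > 0`, `c > 0`, `M > 0`, and let `y : [0,1] → ℝ` be continuous,
nonnegative, differentiable on `(0,1)`, with `y(0) ≤ M` and
`y′(t) ≤ −κ y(t)² / (M (e^{−2λt} + c²))` on `(0,1)`. Then for all `t ∈ [0,1]`,
`y(t) ≤ M / (1 + (κ/(2λc²)) log((c² e^{2λt} + 1)/(c² + 1)))`. -/
theorem enhanced_dissipation_decay (κ lam c M : ℝ) (hκ : 0 < κ) (hlam : 0 < lam)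
    (hc : 0 < c) (hM : 0 < M) (y y' : ℝ → ℝ)
    (hy_cont : ContinuousOn y (Set.Icc 0 1))
    (hy_nonneg : ∀ t ∈ Set.Icc (0 : ℝ) 1, 0 ≤ y t)
    (hy0 : y 0 ≤ M)
    (hy_deriv : ∀ t ∈ Set.Ioo (0 : ℝ) 1, HasDerivAt y (y' t) t)
    (hy_ineq : ∀ t ∈ Set.Ioo (0 : ℝ) 1,
      y' t ≤ -κ * (y t) ^ 2 / (M * (Real.exp (-2 * lam * t) + c ^ 2))) :
    ∀ t ∈ Set.Icc (0 : ℝ) 1,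
      y t ≤ M / (1 + (κ / (2 * lam * c ^ 2)) *
        Real.log ((c ^ 2 * Real.exp (2 * lam * t) + 1) / (c ^ 2 + 1))) :=
  enhanced_dissipation_decay_general hκ.le hlam.ne' hc.ne' hM hy_cont hy0 hy_deriv hy_ineq
end
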